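/- Palm correction estimate, first power of kernel (Lemma 4.5, second part): fix θ with −√2 < θ < √2 and R ∈ ℕ. With x_θ^N = x/N + θ and T^N_{r,∞}(x) = { y ∈ ℝ : r/N ≤ |x_θ^N − y| }, one has lim_{r→∞} limsup_{N→∞} sup_{|x| < R} | ∫_{T^N_{r,∞}(x)} L^N(x_θ^N, y) / ( |x_θ^N − y| · L^N(x_θ^N, x_θ^N) ) dy | = 0. -/

import Mathlib

/-!
The functions `ψ_n` are orthonormal, so `∫ L^N(b, y)² dy = L^N(b, b) / N`, and Cauchy–Schwarz
against `|b - y|⁻¹` on `{r / N ≤ |b - y|}`, whose square has integral `2 N / r`, bounds the Palm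
integral by `√(2 / (r L^N(b, b)))`. It remains to bound `L^N(b, b)` below near `b = θ`.

Put `f x = K^N(x, x)` and `c = √(2 N)`. Then `f' = -c ψ_{N-1} ψ_N`, and the confluent
Christoffel–Darboux formula `f x = N (ψ_{N-1}² + ψ_N²) - c x ψ_{N-1} ψ_N` with AM-GM gives
`|f' x| (c - |x|) ≤ f x`. Hence `f x / (c - |x|)` does not decrease along rays from the origin, so
`f` is at least `f 0 (1 - |x| / c)`. At the origin the formula reads
`K^{N+1}(0, 0) = (N + 1) (K^{N+2}(0, 0) - K^N(0, 0))`, which makes `K^N(0, 0)` grow like `√N`.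
-/

open Real MeasureTheory Filter Set

/-- Physicists' Hermite polynomial `H_n(x) = (-1)^n e^{x^2} (d/dx)^n e^{-x^2}`. -/
noncomputable def hermiteP (n : ℕ) (x : ℝ) : ℝ :=
  (-1 : ℝ) ^ n * Real.exp (x ^ 2) * iteratedDeriv n (fun t => Real.exp (-t ^ 2)) x

/-- Oscillator wave function `ψ_n(x) = (√π 2^n n!)^{-1/2} e^{-x^2/2} H_n(x)`. -/
noncomputable def osc (n : ℕ) (x : ℝ) : ℝ :=
  (Real.sqrt (Real.sqrt Real.pi * 2 ^ n * (n.factorial : ℝ)))⁻¹ *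
    Real.exp (-x ^ 2 / 2) * hermiteP n x

/-- The kernel `K^N(x,y) = Σ_{k=0}^{N-1} ψ_k(x) ψ_k(y)`. -/
noncomputable def kerK (N : ℕ) (x y : ℝ) : ℝ :=
  ∑ k ∈ Finset.range N, osc k x * osc k y

/-- The rescaled kernel `L^N(x,y) = N^{-1/2} K^N(√N x, √N y)`. -/
noncomputable def kerL (N : ℕ) (x y : ℝ) : ℝ :=
  (Real.sqrt (N : ℝ))⁻¹ * kerK N (Real.sqrt (N : ℝ) * x) (Real.sqrt (N : ℝ) * y)

section RealAnalysis

lemma apply_zero_mul_le_of_abs_deriv_mul_le {f f' : ℝ → ℝ} {c : ℝ}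
    (hf : ∀ t, |t| < c → HasDerivAt f (f' t) t)
    (hf' : ∀ t, |t| < c → |f' t| * (c - |t|) ≤ f t) {a : ℝ} (ha : |a| < c) :
    f 0 * (c - |a|) ≤ f a * c := by
  have abs_lt_of_mem (s : ℝ) (hs : s ∈ Icc (0 : ℝ) 1) : |s * a| < c := by
    rw [abs_mul, abs_of_nonneg hs.1]
    nlinarith [hs.2, abs_nonneg a]
  have deriv_ray (s : ℝ) (hs : s ∈ Icc (0 : ℝ) 1) :
      HasDerivAt (fun s => f (s * a) / (c - s * |a|))
        ((f' (s * a) * a * (c - s * |a|) + f (s * a) * |a|) / (c - s * |a|) ^ 2) s := by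
    have habs := abs_lt_of_mem s hs
    have hray : HasDerivAt (fun s => f (s * a)) (f' (s * a) * a) s :=
      (hf _ habs).comp s (hasDerivAt_mul_const a)
    rw [abs_mul, abs_of_nonneg hs.1] at habs
    refine (hray.div ((hasDerivAt_mul_const |a|).const_sub c) (by linarith)).congr_deriv ?_
    ring
  have deriv_nonneg (s : ℝ) (hs : s ∈ Icc (0 : ℝ) 1) :
      0 ≤ f' (s * a) * a * (c - s * |a|) + f (s * a) * |a| := by
    have hbound := hf' _ (abs_lt_of_mem s hs)
    rw [abs_mul s, abs_of_nonneg hs.1] at hbound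
    have hpos : 0 ≤ c - s * |a| := by nlinarith [hs.2, abs_nonneg a]
    have habs : -(f' (s * a) * a) ≤ |f' (s * a)| * |a| := by
      rw [← abs_mul]; exact neg_le_abs _
    nlinarith [mul_le_mul_of_nonneg_right habs hpos,
      mul_le_mul_of_nonneg_right hbound (abs_nonneg a)]
  have mono : MonotoneOn (fun s => f (s * a) / (c - s * |a|)) (Icc 0 1) :=
    monotoneOn_of_hasDerivWithinAt_nonneg (convex_Icc 0 1)
      (fun s hs => (deriv_ray s hs).continuousAt.continuousWithinAt)
      (fun s hs => (deriv_ray s (interior_subset hs)).hasDerivWithinAt)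
      (fun s hs => div_nonneg (deriv_nonneg s (interior_subset hs)) (sq_nonneg _))
  have hends := mono (left_mem_Icc.2 zero_le_one) (right_mem_Icc.2 zero_le_one) zero_le_one
  simp only [zero_mul, sub_zero, one_mul] at hends
  rwa [div_le_div_iff₀ ((abs_nonneg a).trans_lt ha) (sub_pos.2 ha)] at hends

lemma abs_integral_mul_le_sqrt_mul_sqrt {α : Type*} [MeasurableSpace α] {μ : Measure α}
    {f g : α → ℝ} (hf : MemLp f 2 μ) (hg : MemLp g 2 μ) :
    |∫ x, f x * g x ∂μ| ≤ √(∫ x, f x ^ 2 ∂μ) * √(∫ x, g x ^ 2 ∂μ) := by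
  have holder := integral_mul_norm_le_Lp_mul_Lq Real.HolderConjugate.two_two
    (by simpa using hf) (by simpa using hg)
  simp only [Real.norm_eq_abs, Real.rpow_two, sq_abs, ← Real.sqrt_eq_rpow, ← abs_mul] at holder
  exact (abs_integral_le_integral_abs).trans holder

lemma setIntegral_abs_inv_sq {ρ : ℝ} (hρ : 0 < ρ) :
    ∫ s in {s : ℝ | ρ ≤ |s|}, (|s|⁻¹) ^ 2 = 2 / ρ := by
  have hS : MeasurableSet {s : ℝ | ρ ≤ |s|} := measurableSet_le measurable_const (by fun_prop)
  calc ∫ s in {s : ℝ | ρ ≤ |s|}, (|s|⁻¹) ^ 2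
      = ∫ s, (Ici ρ).indicator (fun t => (t⁻¹) ^ 2) |s| := by
        rw [← integral_indicator hS]; rfl
    _ = 2 * ∫ t in Ioi 0, (Ici ρ).indicator (fun t => (t⁻¹) ^ 2) t := integral_comp_abs
    _ = 2 * ∫ t in Ioi ρ, t ^ (-2 : ℝ) := by
        rw [setIntegral_indicator measurableSet_Ici,
          inter_eq_right.2 (Ici_subset_Ioi.2 hρ), integral_Ici_eq_integral_Ioi]
        congr 1
        refine setIntegral_congr_fun measurableSet_Ioi fun t ht => ?_
        rw [Real.rpow_neg (hρ.trans ht).le, Real.rpow_two, inv_pow]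
    _ = 2 / ρ := by
        rw [integral_Ioi_rpow_of_lt (by norm_num) hρ]
        norm_num [Real.rpow_neg_one, div_eq_mul_inv]

lemma setIntegral_le_abs_sub_inv_sq {ρ : ℝ} (hρ : 0 < ρ) (b : ℝ) :
    ∫ y in {y : ℝ | ρ ≤ |b - y|}, (|b - y|⁻¹) ^ 2 = 2 / ρ := by
  rw [← setIntegral_abs_inv_sq hρ]
  exact (Measure.measurePreserving_sub_left volume b).setIntegral_preimage_emb
    (MeasurableEquiv.subLeft b).measurableEmbedding (fun s => (|s|⁻¹) ^ 2) {s : ℝ | ρ ≤ |s|}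

lemma memLp_two_abs_sub_inv {ρ : ℝ} (hρ : 0 < ρ) (b : ℝ) :
    MemLp (fun y => |b - y|⁻¹) 2 (volume.restrict {y : ℝ | ρ ≤ |b - y|}) := by
  rw [memLp_two_iff_integrable_sq (by fun_prop)]
  apply Integrable.of_integral_ne_zero
  rw [setIntegral_le_abs_sub_inv_sq hρ]
  positivity

lemma abs_setIntegral_div_abs_sub_le {f : ℝ → ℝ} (hf : MemLp f 2) (b : ℝ) {ρ : ℝ} (hρ : 0 < ρ) :
    |∫ y in {y : ℝ | ρ ≤ |b - y|}, (f y / |b - y|)| ≤ √(∫ y, f y ^ 2) * √(2 / ρ) := by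
  calc |∫ y in {y : ℝ | ρ ≤ |b - y|}, (f y / |b - y|)|
      ≤ √(∫ y in {y : ℝ | ρ ≤ |b - y|}, f y ^ 2) *
          √(∫ y in {y : ℝ | ρ ≤ |b - y|}, (|b - y|⁻¹) ^ 2) :=
        abs_integral_mul_le_sqrt_mul_sqrt (hf.restrict _) (memLp_two_abs_sub_inv hρ b)
    _ ≤ √(∫ y, f y ^ 2) * √(2 / ρ) := by
        rw [setIntegral_le_abs_sub_inv_sq hρ]
        gcongr
        · exact Eventually.of_forall fun y => sq_nonneg _
        · exact hf.integrable_sq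
        · exact Measure.restrict_le_self

end RealAnalysis

section Hermite

open Polynomial

lemma derivative_hermite_succ (n : ℕ) :
    derivative (hermite (n + 1)) = ((n : ℤ[X]) + 1) * hermite n := by
  induction n with
  | zero => simp
  | succ n ih =>
    rw [hermite_succ (n + 1), derivative_sub, derivative_mul, ih, derivative_mul]
    simp only [derivative_X, derivative_add, derivative_natCast, derivative_one, hermite_succ n,
      Nat.cast_add, Nat.cast_one]
    ring

lemma hermiteP_eq_aeval_hermite (n : ℕ) (x : ℝ) :
    hermiteP n x = √2 ^ n * aeval (√2 * x) (hermite n) := by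
  have rescale : (fun t : ℝ => rexp (-t ^ 2)) = fun t => rexp (-((√2 * t) ^ 2 / 2)) := by
    funext t
    congr 1
    linear_combination t ^ 2 / 2 * Real.sq_sqrt (zero_le_two : (0 : ℝ) ≤ 2)
  have smooth : ContDiff ℝ n (fun y : ℝ => rexp (-(y ^ 2 / 2))) := by fun_prop
  rw [hermite_eq_deriv_gaussian', ← iteratedDeriv_eq_iterate, hermiteP, rescale,
    iteratedDeriv_comp_const_mul smooth, mul_pow, Real.sq_sqrt zero_le_two,
    mul_div_cancel_left₀ _ two_ne_zero]
  ring

lemma hasDerivAt_hermiteP (n : ℕ) (x : ℝ) :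
    HasDerivAt (hermiteP n) (2 * x * hermiteP n x - hermiteP (n + 1) x) x := by
  have hpoly : hermiteP n = fun t => √2 ^ n * aeval (√2 * t) (hermite n) :=
    funext (hermiteP_eq_aeval_hermite n)
  rw [hermiteP_eq_aeval_hermite n, hermiteP_eq_aeval_hermite (n + 1), hpoly]
  have hcomp := ((hermite n).hasDerivAt_aeval (√2 * x)).comp x (hasDerivAt_const_mul √2)
  refine (hcomp.const_mul (√2 ^ n)).congr_deriv ?_
  have hsq : √2 ^ 2 = (2 : ℝ) := Real.sq_sqrt zero_le_two
  simp only [hermite_succ, map_sub, map_mul, aeval_X]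
  linear_combination √2 ^ n * x * aeval (√2 * x) (hermite n) * hsq

/-- At `n = 0` the truncated `n - 1` is harmless, here and below: its coefficient vanishes. -/
lemma hermiteP_succ (n : ℕ) (x : ℝ) :
    hermiteP (n + 1) x = 2 * x * hermiteP n x - 2 * n * hermiteP (n - 1) x := by
  have hsq : √2 ^ 2 = (2 : ℝ) := Real.sq_sqrt zero_le_two
  simp only [hermiteP_eq_aeval_hermite]
  cases n with
  | zero =>
    simp only [zero_add, hermite_one, hermite_zero, aeval_X, pow_one, pow_zero, map_one,
      Nat.cast_zero, mul_zero, zero_mul, sub_zero, mul_one]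
    linear_combination x * hsq
  | succ n =>
    simp only [hermite_succ (n + 1), derivative_hermite_succ, map_sub, map_mul, map_add, map_one,
      map_natCast, aeval_X, Nat.cast_add, Nat.cast_one, Nat.add_sub_cancel]
    linear_combination (√2 ^ (n + 1) * x * aeval (√2 * x) (hermite (n + 1)) -
      √2 ^ n * (n + 1) * aeval (√2 * x) (hermite n)) * hsq

lemma integrable_eval_mul_exp_neg_mul_sq (p : ℝ[X]) {b : ℝ} (hb : 0 < b) :
    Integrable fun x : ℝ => p.eval x * rexp (-b * x ^ 2) := by
  induction p using Polynomial.induction_on' with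
  | add p q hp hq => simpa only [eval_add, add_mul] using Integrable.fun_add hp hq
  | monomial n a =>
    have hn : (-1 : ℝ) < n := neg_one_lt_zero.trans_le n.cast_nonneg
    simpa only [Real.rpow_natCast, eval_monomial, mul_assoc] using
      (integrable_rpow_mul_exp_neg_mul_sq hb hn).const_mul a

lemma integrable_hermiteP_mul_hermiteP (m n : ℕ) :
    Integrable fun x : ℝ => hermiteP m x * hermiteP n x * rexp (-x ^ 2) := by
  let rescaled (k : ℕ) : ℝ[X] := ((hermite k).map (Int.castRingHom ℝ)).comp (C √2 * X)
  refine (integrable_eval_mul_exp_neg_mul_sq (C (√2 ^ m * √2 ^ n) * (rescaled m * rescaled n))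
    one_pos).congr (.of_forall fun x => ?_)
  simp only [rescaled, hermiteP_eq_aeval_hermite, aeval_def, eval_mul, eval_C, eval_comp, eval_X,
    eval_map, algebraMap_int_eq, neg_one_mul]
  ring

end Hermite

section Oscillator

/-- The normalising constant `c_n` of the oscillator wave function `ψ_n = c_n e^{-x²/2} H_n`. -/
noncomputable def oscConst (n : ℕ) : ℝ :=
  (√(√π * 2 ^ n * (n.factorial : ℝ)))⁻¹

lemma osc_eq (n : ℕ) (x : ℝ) : osc n x = oscConst n * rexp (-x ^ 2 / 2) * hermiteP n x := rfl

lemma sqrt_mul_oscConst_succ (n : ℕ) :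
    √(2 * (n + 1 : ℕ)) * oscConst (n + 1) = oscConst n := by
  have hfactor : √π * 2 ^ (n + 1) * ((n + 1).factorial : ℝ) =
      2 * (n + 1 : ℕ) * (√π * 2 ^ n * (n.factorial : ℝ)) := by
    rw [Nat.factorial_succ]
    push_cast
    ring
  have hpos : √(2 * (n + 1 : ℕ)) ≠ 0 := by positivity
  rw [oscConst, hfactor, Real.sqrt_mul (x := 2 * ((n + 1 : ℕ) : ℝ)) (by positivity), mul_inv,
    mul_inv_cancel_left₀ hpos, oscConst]

lemma sqrt_mul_osc_succ (n : ℕ) (x : ℝ) :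
    √(2 * (n + 1 : ℕ)) * osc (n + 1) x =
      oscConst n * rexp (-x ^ 2 / 2) * hermiteP (n + 1) x := by
  rw [osc_eq, ← sqrt_mul_oscConst_succ n]
  ring

lemma sqrt_mul_osc_succ_eq_sub (n : ℕ) (x : ℝ) :
    √(2 * (n + 1 : ℕ)) * osc (n + 1) x = 2 * x * osc n x - √(2 * n) * osc (n - 1) x := by
  rw [sqrt_mul_osc_succ, hermiteP_succ, osc_eq]
  cases n with
  | zero => simp only [Nat.cast_zero, mul_zero, zero_mul, sub_zero, Real.sqrt_zero]; ring
  | succ n =>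
    have hsq : √(2 * (n + 1 : ℕ)) ^ 2 = 2 * ((n + 1 : ℕ) : ℝ) := Real.sq_sqrt (by positivity)
    rw [Nat.add_sub_cancel, osc_eq, ← sqrt_mul_oscConst_succ n]
    linear_combination oscConst (n + 1) * rexp (-x ^ 2 / 2) * hermiteP n x * hsq

lemma hasDerivAt_osc (n : ℕ) (x : ℝ) :
    HasDerivAt (osc n) (x * osc n x - √(2 * (n + 1 : ℕ)) * osc (n + 1) x) x := by
  have hgauss : HasDerivAt (fun t : ℝ => rexp (-t ^ 2 / 2)) (rexp (-x ^ 2 / 2) * -x) x := by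
    refine (((hasDerivAt_pow 2 x).neg.div_const 2).exp).congr_deriv ?_
    simp only [Nat.cast_ofNat, Nat.add_one_sub_one, pow_one, Pi.neg_apply]
    ring
  refine ((hgauss.const_mul (oscConst n)).mul (hasDerivAt_hermiteP n x)).congr_deriv ?_
  rw [sqrt_mul_osc_succ, osc_eq]
  ring

lemma hasDerivAt_osc' (n : ℕ) (x : ℝ) :
    HasDerivAt (osc n) (√(2 * n) * osc (n - 1) x - x * osc n x) x := by
  refine (hasDerivAt_osc n x).congr_deriv ?_
  linear_combination -sqrt_mul_osc_succ_eq_sub n x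

lemma continuous_osc (n : ℕ) : Continuous (osc n) :=
  continuous_iff_continuousAt.2 fun x => (hasDerivAt_osc n x).continuousAt

lemma osc_mul_osc (m n : ℕ) (x : ℝ) :
    osc m x * osc n x =
      oscConst m * oscConst n * (hermiteP m x * hermiteP n x * rexp (-x ^ 2)) := by
  have hexp : rexp (-x ^ 2) = rexp (-x ^ 2 / 2) * rexp (-x ^ 2 / 2) := by
    rw [← Real.exp_add, add_halves]
  rw [osc_eq, osc_eq, hexp]
  ring

lemma osc_zero_sq (x : ℝ) : osc 0 x ^ 2 = (√π)⁻¹ * rexp (-x ^ 2) := by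
  have hconst : oscConst 0 * oscConst 0 = (√π)⁻¹ := by
    simp only [oscConst, pow_zero, Nat.factorial_zero, Nat.cast_one, mul_one]
    rw [← mul_inv, Real.mul_self_sqrt (Real.sqrt_nonneg π)]
  have hone : hermiteP 0 x = 1 := by simp [hermiteP_eq_aeval_hermite]
  rw [sq, osc_mul_osc, hconst, hone, one_mul, one_mul]

lemma integrable_osc_mul_osc (m n : ℕ) : Integrable fun x => osc m x * osc n x := by
  simp only [osc_mul_osc]
  exact (integrable_hermiteP_mul_hermiteP m n).const_mul _

lemma memLp_two_osc (n : ℕ) : MemLp (osc n) 2 := by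
  rw [memLp_two_iff_integrable_sq (continuous_osc n).aestronglyMeasurable]
  simpa only [sq] using integrable_osc_mul_osc n n

lemma sqrt_mul_integral_osc_mul_osc_succ (m n : ℕ) :
    √(2 * (n + 1 : ℕ)) * ∫ x, osc m x * osc (n + 1) x =
      √(2 * m) * ∫ x, osc (m - 1) x * osc n x := by
  have lower := (integrable_osc_mul_osc (m - 1) n).const_mul √(2 * m)
  have raise := (integrable_osc_mul_osc m (n + 1)).const_mul √(2 * (n + 1 : ℕ))
  have hderiv (x : ℝ) : HasDerivAt (fun t => osc m t * osc n t)
      (√(2 * m) * (osc (m - 1) x * osc n x) -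
        √(2 * (n + 1 : ℕ)) * (osc m x * osc (n + 1) x)) x := by
    refine ((hasDerivAt_osc' m x).mul (hasDerivAt_osc n x)).congr_deriv ?_
    ring
  have hzero := integral_eq_zero_of_hasDerivAt_of_integrable hderiv (lower.sub raise)
    (integrable_osc_mul_osc m n)
  rw [integral_sub lower raise, integral_const_mul, integral_const_mul] at hzero
  exact (sub_eq_zero.1 hzero).symm

lemma integral_osc_zero_mul_self : ∫ x, osc 0 x * osc 0 x = 1 := by
  have hgauss : ∫ x : ℝ, rexp (-x ^ 2) = √π := by simpa using integral_gaussian 1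
  simp only [← sq, osc_zero_sq, integral_const_mul, hgauss]
  exact inv_mul_cancel₀ (by positivity)

lemma integral_osc_zero_mul_osc_succ (n : ℕ) : ∫ x, osc 0 x * osc (n + 1) x = 0 := by
  have h := sqrt_mul_integral_osc_mul_osc_succ 0 n
  rw [Nat.cast_zero, mul_zero, Real.sqrt_zero, zero_mul] at h
  exact (mul_eq_zero.1 h).resolve_left (by positivity)

lemma integral_osc_mul_osc (m n : ℕ) : ∫ x, osc m x * osc n x = if m = n then 1 else 0 := by
  induction n generalizing m with
  | zero =>
    cases m with
    | zero => exact integral_osc_zero_mul_self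
    | succ m =>
      rw [if_neg m.succ_ne_zero]
      simpa only [mul_comm] using integral_osc_zero_mul_osc_succ m
  | succ n ih =>
    cases m with
    | zero => exact integral_osc_zero_mul_osc_succ n
    | succ m =>
      have h := sqrt_mul_integral_osc_mul_osc_succ (m + 1) n
      rw [Nat.add_sub_cancel, ih] at h
      have hpos : √(2 * (n + 1 : ℕ)) ≠ 0 := by positivity
      refine mul_left_cancel₀ hpos (h.trans ?_)
      simp only [Nat.succ_inj]
      split_ifs with hmn
      · rw [hmn]
      · rw [mul_zero, mul_zero]

end Oscillator

section Kernel

lemma kerK_succ_self (N : ℕ) (x : ℝ) : kerK (N + 1) x x = kerK N x x + osc N x ^ 2 := by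
  rw [kerK, Finset.sum_range_succ, ← sq, kerK]

lemma kerK_self_nonneg (N : ℕ) (x : ℝ) : 0 ≤ kerK N x x :=
  Finset.sum_nonneg fun _ _ => mul_self_nonneg _

lemma continuous_kerK (N : ℕ) (a : ℝ) : Continuous (kerK N a) :=
  continuous_finsetSum _ fun k _ => (continuous_osc k).const_mul (osc k a)

lemma memLp_two_kerK (N : ℕ) (a : ℝ) : MemLp (kerK N a) 2 :=
  memLp_finsetSum _ fun k _ => (memLp_two_osc k).const_mul (osc k a)

lemma integral_kerK_mul_kerK (N : ℕ) (a b : ℝ) :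
    ∫ t, kerK N a t * kerK N b t = kerK N a b := by
  have hint (i j : ℕ) : Integrable fun t => osc i a * osc j b * (osc i t * osc j t) :=
    (integrable_osc_mul_osc i j).const_mul _
  calc ∫ t, kerK N a t * kerK N b t
      = ∫ t, ∑ i ∈ Finset.range N, ∑ j ∈ Finset.range N,
          osc i a * osc j b * (osc i t * osc j t) := by
        simp only [kerK, Finset.sum_mul_sum, mul_mul_mul_comm]
    _ = ∑ i ∈ Finset.range N, ∑ j ∈ Finset.range N,
          osc i a * osc j b * ∫ t, osc i t * osc j t := by
        rw [integral_finsetSum _ fun i _ => integrable_finsetSum _ fun j _ => hint i j]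
        refine Finset.sum_congr rfl fun i _ => ?_
        simp only [integral_finsetSum _ fun j _ => hint i j, integral_const_mul]
    _ = kerK N a b := by
        refine Finset.sum_congr rfl fun i hi => ?_
        simp only [integral_osc_mul_osc, mul_ite, mul_one, mul_zero, Finset.sum_ite_eq, if_pos hi]

lemma hasDerivAt_kerK_self (N : ℕ) (x : ℝ) :
    HasDerivAt (fun t => kerK N t t) (-(√(2 * N) * osc (N - 1) x * osc N x)) x := by
  induction N with
  | zero => simpa [kerK] using hasDerivAt_const x (0 : ℝ)
  | succ N ih =>
    simp only [kerK_succ_self, Nat.add_sub_cancel]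
    refine (ih.add ((hasDerivAt_osc N x).pow 2)).congr_deriv ?_
    simp only [Nat.cast_ofNat, Nat.add_one_sub_one, pow_one]
    linear_combination -osc N x * sqrt_mul_osc_succ_eq_sub N x

lemma christoffel_darboux_kerK_self (N : ℕ) (x : ℝ) :
    kerK N x x = N * (osc (N - 1) x ^ 2 + osc N x ^ 2) -
      √(2 * N) * x * osc (N - 1) x * osc N x := by
  induction N with
  | zero => simp [kerK]
  | succ N ih =>
    have hsq (k : ℕ) : √(2 * k) ^ 2 = 2 * (k : ℝ) := Real.sq_sqrt (by positivity)
    have hcast : ((N + 1 : ℕ) : ℝ) = N + 1 := Nat.cast_succ N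
    rw [kerK_succ_self, ih, Nat.add_sub_cancel]
    linear_combination
      -(√(2 * (N + 1 : ℕ)) * osc (N + 1) x - √(2 * N) * osc (N - 1) x) / 2 *
          sqrt_mul_osc_succ_eq_sub N x +
        osc (N + 1) x ^ 2 / 2 * hsq (N + 1) - osc (N - 1) x ^ 2 / 2 * hsq N -
        osc N x ^ 2 * hcast

lemma abs_deriv_kerK_self_mul_le (N : ℕ) (x : ℝ) :
    |-(√(2 * N) * osc (N - 1) x * osc N x)| * (√(2 * N) - |x|) ≤ kerK N x x := by
  have hsq : √(2 * N) ^ 2 = 2 * (N : ℝ) := Real.sq_sqrt (by positivity)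
  rw [christoffel_darboux_kerK_self]
  set c := √(2 * (N : ℝ))
  set u := osc (N - 1) x
  set v := osc N x
  have amgm : N * (2 * |u * v|) ≤ N * (u ^ 2 + v ^ 2) := by
    gcongr
    rw [abs_mul, ← mul_assoc, ← sq_abs u, ← sq_abs v]
    exact two_mul_le_add_sq |u| |v|
  have hcross : c * x * u * v ≤ c * |x| * |u * v| := by
    refine (le_abs_self _).trans_eq ?_
    rw [mul_assoc, abs_mul, abs_mul c, abs_of_nonneg (Real.sqrt_nonneg _)]
  calc |-(c * u * v)| * (c - |x|)
      = N * (2 * |u * v|) - c * |x| * |u * v| := by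
        rw [abs_neg, mul_assoc, abs_mul c, abs_of_nonneg (Real.sqrt_nonneg _)]
        linear_combination |u * v| * hsq
    _ ≤ N * (u ^ 2 + v ^ 2) - c * x * u * v := sub_le_sub amgm hcross

lemma kerK_zero_zero_mul_le {N : ℕ} {a : ℝ} (ha : |a| < √(2 * N)) :
    kerK N 0 0 * (√(2 * N) - |a|) ≤ kerK N a a * √(2 * N) :=
  apply_zero_mul_le_of_abs_deriv_mul_le (f := fun t => kerK N t t)
    (fun t _ => hasDerivAt_kerK_self N t) (fun t _ => abs_deriv_kerK_self_mul_le N t) ha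

lemma add_two_mul_kerK_zero_zero_le (N : ℕ) :
    (N + 2) * kerK N 0 0 ≤ (N + 1) * kerK (N + 2) 0 0 := by
  have hsum : kerK (N + 2) 0 0 = kerK N 0 0 + (osc N 0 ^ 2 + osc (N + 1) 0 ^ 2) := by
    rw [kerK_succ_self, kerK_succ_self, add_assoc]
  have hmul : kerK (N + 1) 0 0 = (N + 1) * (osc N 0 ^ 2 + osc (N + 1) 0 ^ 2) := by
    rw [christoffel_darboux_kerK_self]
    simp
  have hmono : kerK N 0 0 ≤ kerK (N + 1) 0 0 := by
    rw [kerK_succ_self]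
    exact le_add_of_nonneg_right (sq_nonneg _)
  rw [hsum]
  linarith

lemma kerK_one_zero_zero_sq : kerK 1 0 0 ^ 2 = 1 / π := by
  rw [kerK_succ_self, osc_zero_sq]
  simp [kerK, Real.sq_sqrt Real.pi_pos.le]

lemma div_le_kerK_zero_zero_sq (N : ℕ) : (N + 2) / (3 * π) ≤ kerK (N + 1) 0 0 ^ 2 := by
  induction N using Nat.twoStepInduction with
  | zero =>
    calc ((0 : ℕ) + 2) / (3 * π) = 2 / 3 * (1 / π) := by push_cast; field_simp; norm_num
      _ ≤ 1 / π := mul_le_of_le_one_left (by positivity) (by norm_num)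
      _ = kerK 1 0 0 ^ 2 := kerK_one_zero_zero_sq.symm
  | one =>
    calc ((1 : ℕ) + 2) / (3 * π) = kerK 1 0 0 ^ 2 := by
          rw [kerK_one_zero_zero_sq]
          field_simp
          norm_num
      _ ≤ kerK 2 0 0 ^ 2 := by
          rw [kerK_succ_self 1]
          gcongr
          · exact kerK_self_nonneg 1 0
          · exact le_add_of_nonneg_right (sq_nonneg _)
  | more N ih _ =>
    have hgrowth : ((N + 3) * kerK (N + 1) 0 0) ^ 2 ≤ ((N + 2) * kerK (N + 3) 0 0) ^ 2 := by
      have hstep := add_two_mul_kerK_zero_zero_le (N + 1)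
      push_cast at hstep
      refine pow_le_pow_left₀ (mul_nonneg (by positivity) (kerK_self_nonneg _ _)) ?_ 2
      linarith
    have hweights : ((N : ℝ) + 2) ^ 2 * (N + 4) ≤ (N + 3) ^ 2 * (N + 2) := by nlinarith
    refine le_of_mul_le_mul_left ?_ (show 0 < ((N : ℝ) + 2) ^ 2 by positivity)
    calc ((N : ℝ) + 2) ^ 2 * (((N + 2 : ℕ) + 2) / (3 * π))
        = ((N : ℝ) + 2) ^ 2 * (N + 4) / (3 * π) := by push_cast; ring
      _ ≤ (N + 3) ^ 2 * (N + 2) / (3 * π) := by gcongr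
      _ = (N + 3) ^ 2 * ((N + 2) / (3 * π)) := by ring
      _ ≤ (N + 3) ^ 2 * kerK (N + 1) 0 0 ^ 2 := by gcongr
      _ ≤ (N + 2) ^ 2 * kerK (N + 3) 0 0 ^ 2 := by simpa only [mul_pow] using hgrowth

lemma sqrt_div_le_kerK_zero_zero (N : ℕ) : √(N / (3 * π)) ≤ kerK N 0 0 := by
  cases N with
  | zero => simp [kerK]
  | succ N =>
    refine Real.sqrt_le_iff.2 ⟨kerK_self_nonneg _ _, le_trans ?_ (div_le_kerK_zero_zero_sq N)⟩
    gcongr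
    push_cast
    linarith

end Kernel

section RescaledKernel

lemma kerL_self_nonneg (N : ℕ) (b : ℝ) : 0 ≤ kerL N b b :=
  mul_nonneg (by positivity) (kerK_self_nonneg _ _)

lemma memLp_two_kerL {N : ℕ} (hN : N ≠ 0) (b : ℝ) : MemLp (kerL N b) 2 := by
  have hcont : Continuous fun y => kerK N (√N * b) (√N * y) :=
    (continuous_kerK N _).comp (continuous_const_mul _)
  have hscaled : MemLp (fun y => kerK N (√N * b) (√N * y)) 2 := by
    rw [memLp_two_iff_integrable_sq hcont.aestronglyMeasurable]
    exact (memLp_two_kerK N _).integrable_sq.comp_mul_left' (by positivity)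
  exact hscaled.const_mul _

lemma integral_kerL_mul_kerL (N : ℕ) (a b : ℝ) :
    ∫ y, kerL N a y * kerL N b y = kerL N a b / N := by
  calc ∫ y, kerL N a y * kerL N b y
      = ((√N)⁻¹) ^ 2 * ∫ y, kerK N (√N * a) (√N * y) * kerK N (√N * b) (√N * y) := by
        rw [← integral_const_mul]
        congr with y
        rw [kerL, kerL]
        ring
    _ = ((√N)⁻¹) ^ 2 * ((√N)⁻¹ * kerK N (√N * a) (√N * b)) := by
        rw [Measure.integral_comp_mul_left (fun t => kerK N (√N * a) t * kerK N (√N * b) t),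
          integral_kerK_mul_kerK, abs_of_nonneg (by positivity), smul_eq_mul]
    _ = kerL N a b / N := by
        rw [inv_pow, Real.sq_sqrt N.cast_nonneg, kerL]
        ring

lemma abs_setIntegral_kerL_div_le {N : ℕ} (hN : N ≠ 0) {r : ℝ} (hr : 0 < r) (b : ℝ) :
    |∫ y in {y : ℝ | r / N ≤ |b - y|}, kerL N b y / (|b - y| * kerL N b b)| ≤
      √(2 / (r * kerL N b b)) := by
  have hnonneg := kerL_self_nonneg N b
  calc |∫ y in {y : ℝ | r / N ≤ |b - y|}, kerL N b y / (|b - y| * kerL N b b)|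
      = |∫ y in {y : ℝ | r / N ≤ |b - y|}, (kerL N b y / |b - y|)| / kerL N b b := by
        simp only [← div_div, integral_div, abs_div, abs_of_nonneg hnonneg]
    _ ≤ √(∫ y, kerL N b y ^ 2) * √(2 / (r / N)) / kerL N b b := by
        gcongr
        exact abs_setIntegral_div_abs_sub_le (memLp_two_kerL hN b) b (by positivity)
    _ = √(2 / r) * (√(kerL N b b) / kerL N b b) := by
        have hratio : kerL N b b / N * (2 / (r / N)) = 2 / r * kerL N b b := by field_simp
        simp only [sq, integral_kerL_mul_kerL]
        rw [← Real.sqrt_mul (by positivity), hratio, Real.sqrt_mul (by positivity), mul_div_assoc]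
    _ = √(2 / (r * kerL N b b)) := by
        rw [Real.sqrt_div_self, ← div_eq_mul_inv, ← Real.sqrt_div (by positivity), div_div]

lemma sqrt_mul_one_sub_le_kerL_self {N : ℕ} (hN : N ≠ 0) {b : ℝ} (hb : |b| < √2) :
    √(1 / (3 * π)) * (1 - |b| / √2) ≤ kerL N b b := by
  have hsN : 0 < √(N : ℝ) := by positivity
  have hedge : √(2 * N) = √N * √2 := by rw [mul_comm, Real.sqrt_mul N.cast_nonneg]
  have habs : |√N * b| = √N * |b| := by rw [abs_mul, abs_of_pos hsN]
  have hcompare : kerK N 0 0 * (1 - |b| / √2) ≤ kerK N (√N * b) (√N * b) := by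
    have h := kerK_zero_zero_mul_le (N := N) (a := √N * b) (by rw [habs, hedge]; gcongr)
    rw [habs, hedge] at h
    refine le_of_mul_le_mul_right (le_trans (le_of_eq ?_) h) (by positivity : 0 < √N * √2)
    field_simp
  have hgap : 0 ≤ 1 - |b| / √2 := sub_nonneg.2 ((div_le_one (by positivity)).2 hb.le)
  calc √(1 / (3 * π)) * (1 - |b| / √2)
      = (√N)⁻¹ * (√(N / (3 * π)) * (1 - |b| / √2)) := by
        rw [div_eq_mul_one_div (N : ℝ), Real.sqrt_mul N.cast_nonneg, mul_assoc,
          inv_mul_cancel_left₀ hsN.ne']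
    _ ≤ (√N)⁻¹ * (kerK N 0 0 * (1 - |b| / √2)) := by
        gcongr
        exact sqrt_div_le_kerK_zero_zero N
    _ ≤ kerL N b b := by rw [kerL]; gcongr

lemma exists_pos_le_kerL_self {θ : ℝ} (hθ : |θ| < √2) (R : ℝ) :
    ∃ c > 0, ∃ N₀ : ℕ, ∀ N ≥ N₀, ∀ x : ℝ, |x| < R →
      c ≤ kerL N (x / N + θ) (x / N + θ) := by
  obtain ⟨β, hθβ, hβ⟩ := exists_between hθ
  obtain ⟨N₀, hN₀⟩ := exists_nat_ge (R / (β - |θ|))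
  have hβpos : 0 < 1 - β / √2 := sub_pos.2 ((div_lt_one (by positivity)).2 hβ)
  refine ⟨√(1 / (3 * π)) * (1 - β / √2), by positivity, N₀ + 1, fun N hN x hx => ?_⟩
  have hNpos : (0 : ℝ) < N := by exact_mod_cast N₀.succ_pos.trans_le hN
  have hshift : |x / N + θ| ≤ β := by
    have hle : |x| / N ≤ β - |θ| := by
      rw [div_le_comm₀ hNpos (sub_pos.2 hθβ)]
      calc |x| / (β - |θ|) ≤ R / (β - |θ|) := by gcongr
        _ ≤ N₀ := hN₀
        _ ≤ N := by exact_mod_cast (Nat.le_succ N₀).trans hN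
    calc |x / N + θ| ≤ |x / N| + |θ| := abs_add_le _ _
      _ ≤ β := by rw [abs_div, abs_of_pos hNpos]; linarith
  calc √(1 / (3 * π)) * (1 - β / √2) ≤ √(1 / (3 * π)) * (1 - |x / N + θ| / √2) := by gcongr
    _ ≤ kerL N (x / N + θ) (x / N + θ) :=
        sqrt_mul_one_sub_le_kerL_self (by exact_mod_cast hNpos.ne') (hshift.trans_lt hβ)

end RescaledKernel

/-- Palm correction estimate, first power of the kernel (Lemma 4.5, second part). -/
theorem palm_correction_first_power (θ : ℝ) (hθ1 : -Real.sqrt 2 < θ) (hθ2 : θ < Real.sqrt 2)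
    (R : ℕ) (hR : 1 ≤ R) :
    ∀ ε : ℝ, 0 < ε → ∃ r0 : ℝ, ∀ r : ℝ, r0 ≤ r → ∃ N0 : ℕ, ∀ N : ℕ, N0 ≤ N →
      ∀ x : ℝ, |x| < (R : ℝ) →
      |∫ y in {y : ℝ | r / (N : ℝ) ≤ |x / (N : ℝ) + θ - y|},
          kerL N (x / (N : ℝ) + θ) y /
            (|x / (N : ℝ) + θ - y| *
              kerL N (x / (N : ℝ) + θ) (x / (N : ℝ) + θ))| < ε := by
  intro ε hε
  obtain ⟨c, hc, N₁, hlower⟩ := exists_pos_le_kerL_self (abs_lt.2 ⟨hθ1, hθ2⟩) R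
  refine ⟨2 / ε ^ 2 / c + 1, fun r hr => ⟨N₁ + 1, fun N hN x hx => ?_⟩⟩
  have hrpos : 0 < r := lt_of_lt_of_le (by positivity) hr
  have hthreshold : 2 / ε ^ 2 < r * c := (div_lt_iff₀ hc).1 ((lt_add_one _).trans_le hr)
  calc _ ≤ √(2 / (r * kerL N (x / N + θ) (x / N + θ))) :=
        abs_setIntegral_kerL_div_le (by omega) hrpos _
    _ ≤ √(2 / (r * c)) := by
        gcongr
        exact hlower N (by omega) x hx
    _ < ε := by
        rw [Real.sqrt_lt' hε, div_lt_comm₀ (by positivity) (by positivity)]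
        exact hthreshold
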